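/- Fix an integer r ≥ 1. There exists a constant C > 0 such that for all real numbers x_1,…,x_r ≥ 1, the family of terms 1/(φ([n_1,…,n_r])·n_1·n_2⋯n_r), indexed by multi-indices N = (n_1,…,n_r) of positive integers with n_i > x_i for every i ∈ {1,…,r}, is summable and its sum is at most C/max(x_1,…,x_r). -/

import Mathlib

open scoped BigOperators

/-- The general term `1/(φ([n_1,…,n_r])·n_1⋯n_r)` associated to a multi-index
`N = (n_1,…,n_r)` of positive integers. -/
noncomputable def eulerTerm (r : ℕ) (N : Fin r → ℕ+) : ℝ :=
  1 / ((Nat.totient (Finset.univ.lcm fun i => (N i : ℕ)) : ℝ) * ∏ i, ((N i : ℕ) : ℝ))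

/-!
Fix the coordinate `n_j` in which `x` is largest and sum over the other coordinates without
restriction, one at a time. The weight `w = 1/φ` is submultiplicative, so splitting `m = g q` with
`g = gcd(L, m)` gives `w([L, m])/m ≤ w(L)/g · w(q)/q`, and summing over `m` costs one factor
`σ₋₁(L) = ∑_{d ∣ L} 1/d` together with the constant `∑ w(q)/q`. As `σ₋₁` is itself
submultiplicative, this can be iterated and leaves the tail `∑_{n > x_j} σ₋₁(n)^(r-1) w(n)/n`.

Tails of size `O(1/y)` persist when a submultiplicative weight `w` is multiplied by `σ₋₁`: with
`n = d m`,
`∑_{n > y} σ₋₁(n) w(n)/n ≤ ∑_d w(d)/d² · ∑_{m > y/d} w(m)/m ≤ ∑_d w(d)/d² · C d/y`.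
Starting from `w(n) = 1/n`, this reaches every `σ₋₁(n)^k/n`, and hence `1/φ(n)`,
because `1/φ(n) ≤ σ₋₁(n)²/n`.
-/

open scoped ENNReal NNReal ArithmeticFunction.sigma

/-- The divisor function `σ₋₁(n) = ∑_{d ∣ n} 1/d`, with the value `0` at `n = 0`. -/
noncomputable def sigmaNegOne (n : ℕ) : ℝ≥0∞ := ∑ d ∈ n.divisors, (d : ℝ≥0∞)⁻¹

/-- A weight `w` on the natural numbers with `w (a * b) ≤ w a * w b` for all `a` and `b`, coprime
or not. -/
def IsSubmultiplicative (w : ℕ → ℝ≥0∞) : Prop := ∀ a b, w (a * b) ≤ w a * w b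

/-- The tail `∑_{n > y} w(n)/n` of the harmonic series weighted by `w`. -/
noncomputable def harmonicTail (w : ℕ → ℝ≥0∞) (y : ℝ≥0∞) : ℝ≥0∞ :=
  ∑' n : ℕ+, if y < (n : ℕ) then w n / (n : ℕ) else 0

/-- The weighted harmonic tails of `w` are `O(1/y)`, uniformly in `y > 0`. The bound is void at
`y = 0` unless `C = 0`, as `C / 0 = ∞` otherwise. -/
def HasReciprocalTail (w : ℕ → ℝ≥0∞) : Prop :=
  ∃ C : ℝ≥0, ∀ y : ℝ≥0∞, harmonicTail w y ≤ C / y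

section SubmultiplicativeWeights

variable {v w : ℕ → ℝ≥0∞}

theorem natCast_mul_sigmaNegOne (n : ℕ) : n * sigmaNegOne n = σ 1 n := by
  rw [sigmaNegOne, Finset.mul_sum, ArithmeticFunction.sigma_eq_sum_div, Nat.cast_sum]
  refine Finset.sum_congr rfl fun d hd => ?_
  have hd_ne : (d : ℝ≥0∞) ≠ 0 := Nat.cast_ne_zero.2 (Nat.pos_of_mem_divisors hd).ne'
  rw [pow_one, ← div_eq_mul_inv, eq_comm, ENNReal.eq_div_iff hd_ne (ENNReal.natCast_ne_top d)]
  exact_mod_cast Nat.mul_div_cancel' (Nat.dvd_of_mem_divisors hd)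

theorem isSubmultiplicative_sigmaNegOne : IsSubmultiplicative sigmaNegOne := fun a b =>
  calc sigmaNegOne (a * b)
      = ∑ d ∈ (a.divisors ×ˢ b.divisors).image (fun p : ℕ × ℕ => p.1 * p.2), (d : ℝ≥0∞)⁻¹ := by
        rw [sigmaNegOne, Nat.divisors_mul, ← Finset.image_mul_product]
    _ ≤ ∑ p ∈ a.divisors ×ˢ b.divisors, ((p.1 * p.2 : ℕ) : ℝ≥0∞)⁻¹ :=
        Finset.sum_image_le_of_nonneg fun _ _ => zero_le
    _ = sigmaNegOne a * sigmaNegOne b := by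
        rw [sigmaNegOne, sigmaNegOne, Finset.sum_mul_sum, ← Finset.sum_product']
        refine Finset.sum_congr rfl fun p _ => ?_
        rw [Nat.cast_mul, ENNReal.mul_inv (by simp) (by simp)]

theorem isSubmultiplicative_inv : IsSubmultiplicative fun n => (n : ℝ≥0∞)⁻¹ := fun a b => by
  simp only [Nat.cast_mul]
  rw [ENNReal.mul_inv (by simp) (by simp)]

theorem isSubmultiplicative_inv_totient :
    IsSubmultiplicative fun n => (n.totient : ℝ≥0∞)⁻¹ := fun a b => by
  rw [← ENNReal.mul_inv (by simp) (by simp), ENNReal.inv_le_inv]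
  exact_mod_cast Nat.totient_super_multiplicative a b

theorem IsSubmultiplicative.mul (hv : IsSubmultiplicative v)
    (hw : IsSubmultiplicative w) : IsSubmultiplicative (v * w) := fun a b =>
  (mul_le_mul' (hv a b) (hw a b)).trans_eq (mul_mul_mul_comm _ _ _ _)

theorem IsSubmultiplicative.sigmaNegOne_pow_mul (hmul : IsSubmultiplicative w) (k : ℕ) :
    IsSubmultiplicative (sigmaNegOne ^ k * w) := by
  induction k with
  | zero => simpa using hmul
  | succ k ih => simpa only [pow_succ', mul_assoc] using isSubmultiplicative_sigmaNegOne.mul ih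

theorem pow_three_le_totient_mul_sigma_sq (n : ℕ) : n ^ 3 ≤ n.totient * σ 1 n ^ 2 := by
  induction n using Nat.recOnPosPrimePosCoprime with
  | zero => simp
  | one => simp
  | prime_pow p k hp hk =>
    obtain ⟨j, rfl⟩ := Nat.exists_eq_add_one.2 hk
    obtain ⟨q, rfl⟩ := Nat.exists_eq_add_one.2 hp.pos
    have hq : 1 ≤ q := by have := hp.two_le; lia
    have hsigma : (q + 1) ^ j * (q + 2) ≤ σ 1 ((q + 1) ^ (j + 1)) := by
      rw [ArithmeticFunction.sigma_one_apply_prime_pow hp, Finset.sum_range_succ,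
        Finset.sum_range_succ]
      linarith [pow_succ (q + 1) j, Nat.zero_le (∑ k ∈ Finset.range j, (q + 1) ^ k)]
    calc ((q + 1) ^ (j + 1)) ^ 3 = ((q + 1) ^ j) ^ 3 * (q + 1) ^ 3 := by ring
      _ ≤ ((q + 1) ^ j) ^ 3 * (q * (q + 2) ^ 2) := by gcongr; nlinarith
      _ = (q + 1) ^ j * q * ((q + 1) ^ j * (q + 2)) ^ 2 := by ring
      _ ≤ ((q + 1) ^ (j + 1)).totient * σ 1 ((q + 1) ^ (j + 1)) ^ 2 := by
        rw [Nat.totient_prime_pow_succ hp, Nat.add_sub_cancel]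
        gcongr
  | coprime a b _ _ hab iha ihb =>
    rw [ArithmeticFunction.isMultiplicative_sigma.map_mul_of_coprime hab, Nat.totient_mul hab]
    linarith [Nat.mul_le_mul iha ihb]

theorem inv_totient_le_sigmaNegOne_sq_mul_inv (n : ℕ+) :
    ((n : ℕ).totient : ℝ≥0∞)⁻¹ ≤ sigmaNegOne n ^ 2 * ((n : ℕ) : ℝ≥0∞)⁻¹ := by
  have hn : ((n : ℕ) : ℝ≥0∞) ≠ 0 := by simp
  have htop : ((n : ℕ) : ℝ≥0∞) ≠ ⊤ := ENNReal.natCast_ne_top _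
  have hpow : ((n : ℕ) : ℝ≥0∞) ^ 3 ≤ (n : ℕ).totient * (n * sigmaNegOne n) ^ 2 := by
    rw [natCast_mul_sigmaNegOne]
    exact_mod_cast pow_three_le_totient_mul_sigma_sq n
  rw [← div_eq_mul_inv, ENNReal.le_div_iff_mul_le (.inl hn) (.inl htop), mul_comm,
    ← div_eq_mul_inv]
  refine ENNReal.div_le_of_le_mul ?_
  rw [← ENNReal.mul_le_mul_iff_right (pow_ne_zero 2 hn) (ENNReal.pow_ne_top htop)]
  calc ((n : ℕ) : ℝ≥0∞) ^ 2 * (n : ℕ) = (n : ℕ) ^ 3 := by ring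
    _ ≤ (n : ℕ).totient * ((n : ℕ) * sigmaNegOne n) ^ 2 := hpow
    _ = (n : ℕ) ^ 2 * (sigmaNegOne n ^ 2 * (n : ℕ).totient) := by ring

theorem harmonicTail_of_lt_one (w : ℕ → ℝ≥0∞) {y : ℝ≥0∞} (hy : y < 1) :
    harmonicTail w y = ∑' n : ℕ+, w n / (n : ℕ) :=
  tsum_congr fun n => if_pos (hy.trans_le (by exact_mod_cast n.pos))

theorem harmonicTail_mono (hvw : ∀ n : ℕ+, v n ≤ w n) (y : ℝ≥0∞) :
    harmonicTail v y ≤ harmonicTail w y :=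
  ENNReal.tsum_le_tsum fun n => by
    split_ifs
    · exact ENNReal.div_le_div_right (hvw n) _
    · exact le_rfl

theorem HasReciprocalTail.mono (htail : HasReciprocalTail w)
    (hvw : ∀ n : ℕ+, v n ≤ w n) : HasReciprocalTail v :=
  htail.imp fun _ hC y => (harmonicTail_mono hvw y).trans (hC y)

theorem HasReciprocalTail.tsum_ne_top (htail : HasReciprocalTail w) :
    ∑' n : ℕ+, w n / (n : ℕ) ≠ ⊤ := by
  obtain ⟨C, hC⟩ := htail
  rw [← harmonicTail_of_lt_one w ENNReal.one_half_lt_one]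
  exact ne_top_of_le_ne_top (ENNReal.div_ne_top ENNReal.coe_ne_top (by simp)) (hC _)

theorem sum_Ioo_inv_sq_le_ennreal (k n : ℕ) :
    ∑ i ∈ Finset.Ioo k n, ((i : ℝ≥0∞) ^ 2)⁻¹ ≤ 2 / (k + 1) := by
  have hreal := ENNReal.ofReal_le_ofReal (sum_Ioo_inv_sq_le (α := ℝ) k n)
  rw [ENNReal.ofReal_sum_of_nonneg fun _ _ => by positivity,
    ENNReal.ofReal_div_of_pos (by positivity)] at hreal
  convert hreal using 1
  · refine Finset.sum_congr rfl fun i hi => ?_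
    have hi_pos : (0 : ℝ) < i := Nat.cast_pos.2 (Nat.zero_lt_of_lt (Finset.mem_Ioo.1 hi).1)
    rw [ENNReal.ofReal_inv_of_pos (by positivity), ENNReal.ofReal_pow hi_pos.le,
      ENNReal.ofReal_natCast]
  · rw [ENNReal.ofReal_add (by positivity) zero_le_one]
    simp

theorem hasReciprocalTail_inv : HasReciprocalTail fun n => (n : ℝ≥0∞)⁻¹ := by
  refine ⟨2, fun y => ?_⟩
  induction y with
  | top => simp [harmonicTail]
  | coe y =>
    let f : ℕ → ℝ≥0∞ := fun n => if (y : ℝ≥0∞) < n then (n : ℝ≥0∞)⁻¹ / n else 0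
    have hpartial (M : ℕ) : ∑ n ∈ Finset.range M, f n ≤ 2 / y :=
      calc ∑ n ∈ Finset.range M, f n
          = ∑ n ∈ Finset.Ioo ⌊y⌋₊ M, ((n : ℝ≥0∞) ^ 2)⁻¹ := by
            rw [← Finset.sum_filter]
            refine Finset.sum_congr ?_ fun n _ => ?_
            · ext n
              have hlt : (y : ℝ≥0∞) < n ↔ ⌊y⌋₊ < n := by
                rw [Nat.floor_lt zero_le]; exact_mod_cast Iff.rfl
              simp only [Finset.mem_filter, Finset.mem_range, Finset.mem_Ioo, hlt, and_comm]
            · rw [sq, ENNReal.mul_inv (by simp) (by simp), div_eq_mul_inv]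
        _ ≤ 2 / (⌊y⌋₊ + 1) := sum_Ioo_inv_sq_le_ennreal _ _
        _ ≤ 2 / y := ENNReal.div_le_div_left (by exact_mod_cast (Nat.lt_floor_add_one y).le) _
    calc harmonicTail (fun n => (n : ℝ≥0∞)⁻¹) y
        ≤ ∑' n, f n := ENNReal.tsum_comp_le_tsum_of_injective PNat.coe_injective f
      _ ≤ 2 / y := by rw [ENNReal.tsum_eq_iSup_nat]; exact iSup_le hpartial

theorem tsum_sum_divisorsAntidiagonal (F : ℕ → ℕ → ℝ≥0∞) :
    ∑' n : ℕ+, ∑ p ∈ (n : ℕ).divisorsAntidiagonal, F p.1 p.2 = ∑' (a : ℕ+) (b : ℕ+), F a b :=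
  calc ∑' n : ℕ+, ∑ p ∈ (n : ℕ).divisorsAntidiagonal, F p.1 p.2
      = ∑' q : Σ n : ℕ+, (n : ℕ).divisorsAntidiagonal, F q.2.1.1 q.2.1.2 := by
        rw [ENNReal.tsum_sigma']
        exact tsum_congr fun n => (Finset.tsum_subtype _ fun p : ℕ × ℕ => F p.1 p.2).symm
    _ = ∑' p : ℕ+ × ℕ+, F p.1 p.2 :=
        (sigmaAntidiagonalEquivProd.symm.tsum_eq _).symm
    _ = ∑' (a : ℕ+) (b : ℕ+), F a b := ENNReal.tsum_prod (f := fun a b : ℕ+ => F a b)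

theorem IsSubmultiplicative.harmonicTail_sigmaNegOne_mul_le (hmul : IsSubmultiplicative w)
    (y : ℝ≥0∞) : harmonicTail (sigmaNegOne * w) y ≤
      ∑' d : ℕ+, ((d : ℕ) : ℝ≥0∞)⁻¹ * (w d / (d : ℕ)) * harmonicTail w (y / (d : ℕ)) := by
  let F : ℕ → ℕ → ℝ≥0∞ := fun d m =>
    if y < (d * m : ℕ) then (d : ℝ≥0∞)⁻¹ * w (d * m) / (d * m : ℕ) else 0
  calc harmonicTail (sigmaNegOne * w) y
      = ∑' n : ℕ+, ∑ p ∈ (n : ℕ).divisorsAntidiagonal, F p.1 p.2 := by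
        refine tsum_congr fun n => ?_
        have hF : ∀ p ∈ (n : ℕ).divisorsAntidiagonal, F p.1 p.2 =
            if y < (n : ℕ) then (p.1 : ℝ≥0∞)⁻¹ * w n / (n : ℕ) else 0 := fun p hp => by
          simp only [F, (Nat.mem_divisorsAntidiagonal.1 hp).1]
        rw [Finset.sum_congr rfl hF, Finset.sum_ite_irrel, Finset.sum_const_zero, Pi.mul_apply,
          sigmaNegOne, ← Nat.sum_divisorsAntidiagonal fun d _ => (d : ℝ≥0∞)⁻¹, Finset.sum_mul]
        simp only [div_eq_mul_inv, Finset.sum_mul]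
    _ = ∑' (d : ℕ+) (m : ℕ+), F d m := tsum_sum_divisorsAntidiagonal F
    _ ≤ ∑' d : ℕ+, ((d : ℕ) : ℝ≥0∞)⁻¹ * (w d / (d : ℕ)) * harmonicTail w (y / (d : ℕ)) := by
        refine ENNReal.tsum_le_tsum fun d => ?_
        rw [harmonicTail, ← ENNReal.tsum_mul_left]
        refine ENNReal.tsum_le_tsum fun m => ?_
        have hlt : y < ((d : ℕ) * (m : ℕ) : ℕ) ↔ y / (d : ℕ) < (m : ℕ) := by
          rw [ENNReal.div_lt_iff (by simp) (by simp), Nat.cast_mul, mul_comm]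
        simp only [F, hlt, mul_ite, mul_zero]
        split_ifs
        · calc ((d : ℕ) : ℝ≥0∞)⁻¹ * w (d * m) / ((d : ℕ) * (m : ℕ) : ℕ)
              ≤ ((d : ℕ) : ℝ≥0∞)⁻¹ * (w d * w m) / ((d : ℕ) * (m : ℕ) : ℕ) := by
                gcongr
                exact hmul d m
            _ = ((d : ℕ) : ℝ≥0∞)⁻¹ * (w d / (d : ℕ)) * (w m / (m : ℕ)) := by
                rw [Nat.cast_mul, mul_div_assoc, ENNReal.mul_div_mul_comm (by simp) (by simp),
                  mul_assoc]
        · exact le_rfl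

theorem HasReciprocalTail.sigmaNegOne_mul (htail : HasReciprocalTail w)
    (hmul : IsSubmultiplicative w) : HasReciprocalTail (sigmaNegOne * w) := by
  have hS := htail.tsum_ne_top
  obtain ⟨C, hC⟩ := htail
  refine ⟨(∑' n : ℕ+, w n / (n : ℕ)).toNNReal * C, fun y => ?_⟩
  calc harmonicTail (sigmaNegOne * w) y
      ≤ ∑' d : ℕ+, ((d : ℕ) : ℝ≥0∞)⁻¹ * (w d / (d : ℕ)) * harmonicTail w (y / (d : ℕ)) :=
        hmul.harmonicTail_sigmaNegOne_mul_le y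
    _ ≤ ∑' d : ℕ+, (w d / (d : ℕ)) * (C / y) := by
        refine ENNReal.tsum_le_tsum fun d => ?_
        have hcancel : ((d : ℕ) : ℝ≥0∞)⁻¹ * (C / (y / (d : ℕ))) = C / y := by
          rw [div_eq_mul_inv _ (y / _), ENNReal.inv_div (by simp) (by simp), div_eq_mul_inv,
            mul_left_comm, ← mul_assoc ((d : ℕ) : ℝ≥0∞)⁻¹,
            ENNReal.inv_mul_cancel (by simp) (by simp), one_mul, div_eq_mul_inv]
        calc ((d : ℕ) : ℝ≥0∞)⁻¹ * (w d / (d : ℕ)) * harmonicTail w (y / (d : ℕ))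
            ≤ ((d : ℕ) : ℝ≥0∞)⁻¹ * (w d / (d : ℕ)) * (C / (y / (d : ℕ))) := by
              gcongr
              exact hC _
          _ = w d / (d : ℕ) * (C / y) := by rw [mul_right_comm, hcancel, mul_comm]
    _ = _ := by
        rw [ENNReal.tsum_mul_right, ENNReal.coe_mul, ENNReal.coe_toNNReal hS, mul_div_assoc]

theorem HasReciprocalTail.sigmaNegOne_pow_mul (htail : HasReciprocalTail w)
    (hmul : IsSubmultiplicative w) (k : ℕ) : HasReciprocalTail (sigmaNegOne ^ k * w) := by
  induction k with
  | zero => simpa using htail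
  | succ k ih =>
    simpa only [pow_succ', mul_assoc] using ih.sigmaNegOne_mul (hmul.sigmaNegOne_pow_mul k)

theorem hasReciprocalTail_inv_totient : HasReciprocalTail fun n => (n.totient : ℝ≥0∞)⁻¹ :=
  (hasReciprocalTail_inv.sigmaNegOne_pow_mul isSubmultiplicative_inv 2).mono
    inv_totient_le_sigmaNegOne_sq_mul_inv

theorem tsum_ite_dvd_inv {L : ℕ} (hL : L ≠ 0) :
    ∑' g : ℕ+, (if (g : ℕ) ∣ L then ((g : ℕ) : ℝ≥0∞)⁻¹ else 0) = sigmaNegOne L := by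
  let f : ℕ → ℝ≥0∞ := fun g => if g ∣ L then (g : ℝ≥0∞)⁻¹ else 0
  have hsupport : Function.support f ⊆ Set.range ((↑) : ℕ+ → ℕ) := fun g hg =>
    have hdvd : g ∣ L := by_contra fun h => hg (if_neg h)
    ⟨⟨g, Nat.pos_of_dvd_of_pos hdvd (Nat.pos_of_ne_zero hL)⟩, rfl⟩
  calc ∑' g : ℕ+, f g = ∑' g, f g := PNat.coe_injective.tsum_eq hsupport
    _ = ∑ g ∈ L.divisors, f g :=
        tsum_eq_sum fun g hg => if_neg fun h => hg (Nat.mem_divisors.2 ⟨h, hL⟩)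
    _ = sigmaNegOne L := Finset.sum_congr rfl fun g hg => if_pos (Nat.dvd_of_mem_divisors hg)

theorem IsSubmultiplicative.tsum_lcm_div_le (hmul : IsSubmultiplicative w) (L : ℕ+) :
    ∑' m : ℕ+, w (Nat.lcm L m) / (m : ℕ) ≤
      sigmaNegOne L * w L * ∑' m : ℕ+, w m / (m : ℕ) := by
  let F : ℕ → ℕ → ℝ≥0∞ := fun g m =>
    (if g ∣ L then (g : ℝ≥0∞)⁻¹ else 0) * (w L * (w m / m))
  have hterm (m : ℕ+) : w (Nat.lcm L m) / (m : ℕ) ≤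
      ∑ p ∈ (m : ℕ).divisorsAntidiagonal, F p.1 p.2 := by
    set g := Nat.gcd L m
    obtain ⟨q, hq⟩ : g ∣ m := Nat.gcd_dvd_right L m
    have hg : 0 < g := Nat.gcd_pos_of_pos_right _ m.pos
    have hlcm : Nat.lcm L m = L * q := by
      refine Nat.eq_of_mul_eq_mul_left hg ?_
      rw [Nat.gcd_mul_lcm, hq, mul_left_comm]
    have hF : F g q = (g : ℝ≥0∞)⁻¹ * (w L * (w q / q)) :=
      congrArg (· * _) (if_pos (Nat.gcd_dvd_left L m))
    calc w (Nat.lcm L m) / (m : ℕ) ≤ w L * w q / (m : ℕ) := by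
          rw [hlcm]
          gcongr
          exact hmul L q
      _ = F g q := by
          rw [hF, hq, Nat.cast_mul, div_eq_mul_inv, ENNReal.mul_inv (by simp) (by simp),
            div_eq_mul_inv]
          ring
      _ ≤ ∑ p ∈ (m : ℕ).divisorsAntidiagonal, F p.1 p.2 :=
          Finset.single_le_sum (f := fun p : ℕ × ℕ => F p.1 p.2) (fun _ _ => zero_le)
            (Nat.mem_divisorsAntidiagonal.2 ⟨hq.symm, m.ne_zero⟩ : (g, q) ∈ _)
  calc ∑' m : ℕ+, w (Nat.lcm L m) / (m : ℕ)
      ≤ ∑' m : ℕ+, ∑ p ∈ (m : ℕ).divisorsAntidiagonal, F p.1 p.2 := ENNReal.tsum_le_tsum hterm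
    _ = ∑' (g : ℕ+) (m : ℕ+), F g m := tsum_sum_divisorsAntidiagonal F
    _ = sigmaNegOne L * w L * ∑' m : ℕ+, w m / (m : ℕ) := by
        simp only [F, ENNReal.tsum_mul_left, ENNReal.tsum_mul_right, tsum_ite_dvd_inv L.ne_zero,
          mul_assoc]

/-- The term `w([n_1,…,n_r])/(n_1⋯n_r)` of the multi-index `N = (n_1,…,n_r)`. -/
noncomputable def lcmTerm (w : ℕ → ℝ≥0∞) {r : ℕ} (N : Fin r → ℕ+) : ℝ≥0∞ :=
  w (Finset.univ.lcm fun i => (N i : ℕ)) * ∏ i, ((N i : ℕ) : ℝ≥0∞)⁻¹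

theorem lcm_univ_succAbove {r : ℕ} (j : Fin (r + 1)) (f : Fin (r + 1) → ℕ) :
    Finset.univ.lcm f = Nat.lcm (f j) (Finset.univ.lcm fun i => f (j.succAbove i)) := by
  rw [Fin.univ_succAbove r j, Finset.cons_eq_insert, Finset.lcm_insert, Finset.map_eq_image,
    Finset.lcm_image]
  rfl

theorem lcmTerm_insertNth (w : ℕ → ℝ≥0∞) {r : ℕ} (j : Fin (r + 1)) (m : ℕ+) (N : Fin r → ℕ+) :
    lcmTerm w (j.insertNth m N : Fin (r + 1) → ℕ+) =
      ((m : ℕ) : ℝ≥0∞)⁻¹ * lcmTerm (fun n => w (Nat.lcm m n)) N := by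
  simp only [lcmTerm, lcm_univ_succAbove j, Fin.prod_univ_succAbove _ j,
    Fin.insertNth_apply_same, Fin.insertNth_apply_succAbove]
  exact mul_left_comm _ _ _

theorem tsum_insertNth {α : Type*} {r : ℕ} (j : Fin (r + 1)) (f : (Fin (r + 1) → α) → ℝ≥0∞) :
    ∑' N, f N = ∑' (a : α) (N : Fin r → α), f (j.insertNth a N) := by
  rw [← (Fin.insertNthEquiv (fun _ => α) j).tsum_eq]
  exact ENNReal.tsum_prod (f := fun a N => f (j.insertNth a N))

theorem IsSubmultiplicative.tsum_lcmTerm_le (hmul : IsSubmultiplicative w)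
    (r : ℕ) (L : ℕ+) : ∑' N : Fin r → ℕ+, lcmTerm (fun n => w (Nat.lcm L n)) N ≤
      (∏ k ∈ Finset.range r, ∑' m : ℕ+, (sigmaNegOne ^ k * w) m / (m : ℕ)) *
        (sigmaNegOne ^ r * w) L := by
  induction r generalizing L with
  | zero => simp [lcmTerm, tsum_fintype]
  | succ r ih =>
    set S : ℕ → ℝ≥0∞ := fun k => ∑' m : ℕ+, (sigmaNegOne ^ k * w) m / (m : ℕ)
    have hinner (m : ℕ+) : ∑' N : Fin r → ℕ+, lcmTerm (fun n => w (Nat.lcm L (Nat.lcm m n))) N ≤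
        (∏ k ∈ Finset.range r, S k) * (sigmaNegOne ^ r * w) (Nat.lcm L m) := by
      simpa only [PNat.lcm_coe, Nat.lcm_assoc] using ih (PNat.lcm L m)
    calc ∑' N : Fin (r + 1) → ℕ+, lcmTerm (fun n => w (Nat.lcm L n)) N
        = ∑' m : ℕ+, ((m : ℕ) : ℝ≥0∞)⁻¹ *
            ∑' N : Fin r → ℕ+, lcmTerm (fun n => w (Nat.lcm L (Nat.lcm m n))) N := by
          simp only [tsum_insertNth 0, lcmTerm_insertNth, ENNReal.tsum_mul_left]
      _ ≤ ∑' m : ℕ+, ((m : ℕ) : ℝ≥0∞)⁻¹ *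
            ((∏ k ∈ Finset.range r, S k) * (sigmaNegOne ^ r * w) (Nat.lcm L m)) := by
          gcongr with m
          exact hinner m
      _ = (∏ k ∈ Finset.range r, S k) *
            ∑' m : ℕ+, (sigmaNegOne ^ r * w) (Nat.lcm L m) / (m : ℕ) := by
          rw [← ENNReal.tsum_mul_left]
          exact tsum_congr fun m => by rw [div_eq_mul_inv, mul_comm, mul_assoc]
      _ ≤ (∏ k ∈ Finset.range r, S k) * (sigmaNegOne L * (sigmaNegOne ^ r * w) L * S r) := by
          gcongr
          exact (hmul.sigmaNegOne_pow_mul r).tsum_lcm_div_le L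
      _ = (∏ k ∈ Finset.range (r + 1), S k) * (sigmaNegOne ^ (r + 1) * w) L := by
          simp only [Finset.prod_range_succ, Pi.mul_apply, Pi.pow_apply]
          ring

theorem HasReciprocalTail.exists_tsum_lcmTerm_le (htail : HasReciprocalTail w)
    (hmul : IsSubmultiplicative w) (r : ℕ) : ∃ C : ℝ≥0, ∀ (j : Fin r) (y : ℝ≥0∞),
      ∑' N : Fin r → ℕ+, (if y < (N j : ℕ) then lcmTerm w N else 0) ≤ C / y := by
  cases r with
  | zero => exact ⟨0, nofun⟩
  | succ r =>
    set P := ∏ k ∈ Finset.range r, ∑' m : ℕ+, (sigmaNegOne ^ k * w) m / (m : ℕ)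
    have hP : P ≠ ⊤ := ENNReal.prod_ne_top fun k _ => (htail.sigmaNegOne_pow_mul hmul k).tsum_ne_top
    obtain ⟨C, hC⟩ := htail.sigmaNegOne_pow_mul hmul r
    refine ⟨P.toNNReal * C, fun j y => ?_⟩
    calc ∑' N : Fin (r + 1) → ℕ+, (if y < (N j : ℕ) then lcmTerm w N else 0)
        = ∑' m : ℕ+, if y < (m : ℕ) then ((m : ℕ) : ℝ≥0∞)⁻¹ *
            ∑' N : Fin r → ℕ+, lcmTerm (fun n => w (Nat.lcm m n)) N else 0 := by
          rw [tsum_insertNth j]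
          refine tsum_congr fun m => ?_
          simp only [Fin.insertNth_apply_same, lcmTerm_insertNth]
          split_ifs <;> simp only [ENNReal.tsum_mul_left, tsum_zero]
      _ ≤ ∑' m : ℕ+, P * if y < (m : ℕ) then (sigmaNegOne ^ r * w) m / (m : ℕ) else 0 := by
          refine ENNReal.tsum_le_tsum fun m => ?_
          split_ifs
          · rw [div_eq_mul_inv, mul_comm, ← mul_assoc]
            gcongr
            exact hmul.tsum_lcmTerm_le r m
          · exact zero_le
      _ = P * harmonicTail (sigmaNegOne ^ r * w) y := ENNReal.tsum_mul_left
      _ ≤ (P.toNNReal * C : ℝ≥0) / y := by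
          rw [ENNReal.coe_mul, ENNReal.coe_toNNReal hP, mul_div_assoc]
          gcongr
          exact hC y

end SubmultiplicativeWeights

theorem eulerTerm_nonneg (r : ℕ) (N : Fin r → ℕ+) : 0 ≤ eulerTerm r N := by
  unfold eulerTerm
  positivity

theorem ofReal_eulerTerm (r : ℕ) (N : Fin r → ℕ+) :
    ENNReal.ofReal (eulerTerm r N) = lcmTerm (fun n => (n.totient : ℝ≥0∞)⁻¹) N := by
  have hlcm : 0 < Finset.univ.lcm fun i => (N i : ℕ) :=
    Nat.pos_of_ne_zero (Finset.lcm_ne_zero_iff.2 fun i _ => (N i).ne_zero)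
  have htot : 0 < ((Finset.univ.lcm fun i => (N i : ℕ)).totient : ℝ) :=
    Nat.cast_pos.2 (Nat.totient_pos.2 hlcm)
  have hprod : 0 < ∏ i, ((N i : ℕ) : ℝ) := Finset.prod_pos fun i _ => Nat.cast_pos.2 (N i).pos
  rw [eulerTerm, lcmTerm, one_div, ENNReal.ofReal_inv_of_pos (mul_pos htot hprod),
    ENNReal.ofReal_mul htot.le, ENNReal.ofReal_natCast,
    ENNReal.ofReal_prod_of_nonneg fun i _ => Nat.cast_nonneg _,
    ENNReal.mul_inv (.inr (ENNReal.prod_ne_top fun _ _ => ENNReal.ofReal_ne_top)) (by simp),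
    ENNReal.prod_inv_distrib (by simp [Set.Pairwise])]
  simp only [ENNReal.ofReal_natCast]

theorem summable_and_tsum_le_of_tsum_ofReal_le {ι : Type*} {f : ι → ℝ} (hf : ∀ i, 0 ≤ f i)
    {B : ℝ} (hB : 0 ≤ B) (h : ∑' i, ENNReal.ofReal (f i) ≤ ENNReal.ofReal B) :
    Summable f ∧ ∑' i, f i ≤ B := by
  have hsum : Summable f := by
    simpa only [ENNReal.toReal_ofReal (hf _)] using
      ENNReal.summable_toReal (ne_top_of_le_ne_top ENNReal.ofReal_ne_top h)
  refine ⟨hsum, ?_⟩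
  rwa [← ENNReal.ofReal_tsum_of_nonneg hf hsum, ENNReal.ofReal_le_ofReal_iff hB] at h

theorem tail_sum_totient_lcm_max_bigO_general (r : ℕ) :
    ∃ C : ℝ, 0 < C ∧ ∀ (x : Fin r → ℝ) (j : Fin r), 0 < x j →
      Summable (fun N : {N : Fin r → ℕ+ // ∀ i, x i < ((N i : ℕ) : ℝ)} => eulerTerm r N.1) ∧
      ∑' N : {N : Fin r → ℕ+ // ∀ i, x i < ((N i : ℕ) : ℝ)}, eulerTerm r N.1 ≤ C / x j := by
  obtain ⟨C, hC⟩ :=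
    hasReciprocalTail_inv_totient.exists_tsum_lcmTerm_le isSubmultiplicative_inv_totient r
  refine ⟨C + 1, by positivity, fun x j hxj => ?_⟩
  let f : (Fin r → ℕ+) → ℝ≥0∞ := fun N =>
    if ENNReal.ofReal (x j) < (N j : ℕ) then lcmTerm (fun n => (n.totient : ℝ≥0∞)⁻¹) N else 0
  have htail : ∑' N : {N : Fin r → ℕ+ // ∀ i, x i < ((N i : ℕ) : ℝ)},
      ENNReal.ofReal (eulerTerm r N.1) ≤ ENNReal.ofReal (C / x j) :=
    calc ∑' N : {N : Fin r → ℕ+ // ∀ i, x i < ((N i : ℕ) : ℝ)}, ENNReal.ofReal (eulerTerm r N.1)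
        = ∑' N : {N : Fin r → ℕ+ // ∀ i, x i < ((N i : ℕ) : ℝ)}, f N.1 :=
          tsum_congr fun N => by
            rw [ofReal_eulerTerm]
            exact (if_pos ((ENNReal.ofReal_lt_natCast (N.1 j).ne_zero).2 (N.2 j))).symm
      _ ≤ ∑' N, f N := ENNReal.tsum_comp_le_tsum_of_injective Subtype.val_injective f
      _ ≤ C / ENNReal.ofReal (x j) := hC j _
      _ = ENNReal.ofReal (C / x j) := by
          rw [ENNReal.ofReal_div_of_pos hxj, ENNReal.ofReal_coe_nnreal]
  obtain ⟨hsum, hle⟩ := summable_and_tsum_le_of_tsum_ofReal_le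
    (fun _ => eulerTerm_nonneg _ _) (by positivity) htail
  exact ⟨hsum, hle.trans (by gcongr; exact le_add_of_nonneg_right zero_le_one)⟩

/-- Fix `r ≥ 1`. There is a constant `C > 0` such that for all reals
`x_1,…,x_r ≥ 1`, the family `1/(φ([n_1,…,n_r])·n_1⋯n_r)` over multi-indices with
`n_i > x_i` for every `i` is summable with sum at most `C/max(x_1,…,x_r)`. -/
theorem tail_sum_totient_lcm_max_bigO (r : ℕ) (hr : 1 ≤ r) :
    ∃ C : ℝ, 0 < C ∧ ∀ x : Fin r → ℝ, (∀ i, 1 ≤ x i) →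
      Summable (fun N : {N : Fin r → ℕ+ // ∀ i, x i < ((N i : ℕ) : ℝ)} => eulerTerm r N.1) ∧
      ∑' N : {N : Fin r → ℕ+ // ∀ i, x i < ((N i : ℕ) : ℝ)}, eulerTerm r N.1 ≤
        C / Finset.univ.sup' ⟨⟨0, hr⟩, Finset.mem_univ _⟩ x := by
  obtain ⟨C, hC, hbound⟩ := tail_sum_totient_lcm_max_bigO_general r
  refine ⟨C, hC, fun x hx => ?_⟩
  obtain ⟨j, -, hj⟩ := Finset.exists_mem_eq_sup' ⟨⟨0, hr⟩, Finset.mem_univ _⟩ x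
  exact hj ▸ hbound x j (zero_lt_one.trans_le (hx j))
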